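/- arXiv:0803.1284 — 9 statements merged into one kernel-verified Lean document; each statement's English description precedes it below -/
import Mathlib

section
/- Let P₀, …, P_m be a Clifford system on ℝ^{2l}, let e ∈ M₊, and let w ∈ span{P₀e, …, P_me} with ‖w‖ = 1. Then w ∈ M₊, and moreover e ∈ span{P₀w, …, P_mw}. (That is, the natural involution interchanging base point and unit normal maps the unit normal bundle of M₊ to itself.) -/
/-!
Write `w = Q e` with `Q = ∑ aᵢ Pᵢ`. The operator `Q` is symmetric, and summing the Clifford
relations gives `Q Pⱼ + Pⱼ Q = 2 aⱼ` and hence `Q² = |a|²`. Since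
`1 = ‖w‖² = ⟪e, Q² e⟫ = |a|²`, `Q` is an involution, so `e = Q w` lies in the span of the `Pᵢ w`.
Moreover `⟪Pⱼ w, w⟫ = ⟪2 aⱼ e - Q Pⱼ e, Q e⟫ = 2 aⱼ ⟪e, Q e⟫ - ⟪Pⱼ e, e⟫ = 0`, both
terms vanishing because `e ∈ M₊`.
-/

open scoped RealInnerProductSpace

/-- For a Clifford system on `ℝ^{2l}`, `e ∈ M₊`, and a unit vector `w` in the
normal space `span{P₀e, …, P_me}`, the vector `w` again lies in `M₊` and
`e ∈ span{P₀w, …, P_mw}`. -/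
theorem cliffordSystem_normal_involution
    (l m : ℕ) (hl : 1 ≤ l)
    (P : Fin (m + 1) → EuclideanSpace ℝ (Fin (2 * l)) →ₗ[ℝ] EuclideanSpace ℝ (Fin (2 * l)))
    (hsymm : ∀ i x y, ⟪P i x, y⟫ = ⟪x, P i y⟫)
    (horth : ∀ i x, ‖P i x‖ = ‖x‖)
    (hcliff : ∀ i j x, P i (P j x) + P j (P i x) = (if i = j then (2 : ℝ) else 0) • x)
    (e : EuclideanSpace ℝ (Fin (2 * l)))
    (he1 : ‖e‖ = 1) (he2 : ∀ i, ⟪P i e, e⟫ = 0)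
    (w : EuclideanSpace ℝ (Fin (2 * l)))
    (hwN : w ∈ Submodule.span ℝ (Set.range fun i => P i e))
    (hw1 : ‖w‖ = 1) :
    (‖w‖ = 1 ∧ ∀ i, ⟪P i w, w⟫ = 0) ∧
      e ∈ Submodule.span ℝ (Set.range fun i => P i w) := by
  obtain ⟨a, rfl⟩ := (Submodule.mem_span_range_iff_exists_fun ℝ).1 hwN
  set Q := ∑ i, a i • P i with hQ
  have hQx : ∀ x, Q x = ∑ i, a i • P i x := fun x => by
    simp [hQ, LinearMap.sum_apply]
  rw [← hQx e] at hw1 ⊢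
  have hQs : ∀ x y, ⟪Q x, y⟫ = ⟪x, Q y⟫ := fun x y => by
    simp only [hQx, sum_inner, inner_sum, real_inner_smul_left, real_inner_smul_right, hsymm]
  have hQP : ∀ j x, P j (Q x) + Q (P j x) = (2 * a j) • x := fun j x => by
    simp only [hQx, map_sum, map_smul, ← Finset.sum_add_distrib, ← smul_add, hcliff,
      ite_smul, zero_smul, smul_ite, smul_zero, Finset.sum_ite_eq, Finset.mem_univ, if_true,
      smul_smul, mul_comm]
  have hQQ : ∀ x, Q (Q x) = (∑ i, a i ^ 2) • x := fun x => by
    have h1 : Q (Q x) + Q (Q x) = (2 * ∑ i, a i ^ 2) • x := by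
      -- expand the outer `Q` in one summand and the inner `Q` in the other
      have h2 : Q (Q x) = ∑ i, a i • Q (P i x) := by
        conv_lhs => rw [hQx x, map_sum]
        simp only [map_smul]
      nth_rewrite 2 [h2]
      rw [hQx (Q x), ← Finset.sum_add_distrib, Finset.mul_sum, Finset.sum_smul]
      refine Finset.sum_congr rfl fun i _ => ?_
      rw [← smul_add, hQP, smul_smul]
      congr 1
      ring
    rw [← two_smul ℝ, mul_smul] at h1
    exact smul_right_injective _ (two_ne_zero (α := ℝ)) h1
  have hs : ∑ i, a i ^ 2 = 1 := by
    have h := real_inner_self_eq_norm_sq (Q e)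
    rw [hQs, hQQ, real_inner_smul_right, real_inner_self_eq_norm_sq, he1, hw1] at h
    simpa using h
  have hQe : Q (Q e) = e := by rw [hQQ, hs, one_smul]
  have hQ0 : ⟪e, Q e⟫ = 0 := by
    rw [← hQs, hQx, sum_inner]
    simp [real_inner_smul_left, he2]
  refine ⟨⟨hw1, fun j => ?_⟩, ?_⟩
  · rw [eq_sub_of_add_eq (hQP j e), inner_sub_left, real_inner_smul_left, hQ0, hQs, hQe, he2]
    simp
  · exact (Submodule.mem_span_range_iff_exists_fun ℝ).2 ⟨a, (hQx (Q e)).symm.trans hQe⟩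
end

section
/- Let P₀, …, P_m be a Clifford system on ℝ^{2l}, let x ∈ M₊, let a ∈ ℝ^{m+1} with ∑ᵢ (aⁱ)² = 1, and set P := ∑ᵢ aⁱPᵢ. Then for t ∈ ℝ, the point y := (cos t)·x + (sin t)·Px lies in M₊ if and only if sin(2t) = 0. -/
/-!
With `P = ∑ aⁱPᵢ`, the Clifford relations give `PᵢP + PPᵢ = 2aⁱ Id`, hence `P² = |a|² Id = Id`,
and `P` is symmetric. For `x ∈ M₊` this gives
`⟪x, Px⟫ = 0`, `‖Px‖ = 1`, `⟪Pᵢx, Px⟫ = aⁱ` and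
`⟪PᵢPx, Px⟫ = 2aⁱ⟪x, Px⟫ - ⟪PPᵢx, Px⟫ = -⟪Pᵢx, x⟫ = 0`.
Therefore `‖y‖ = 1` for every `t`, and expanding the quadratic form gives
`⟪Pᵢy, y⟫ = sin(2t) aⁱ`. Since `a ≠ 0`, all these numbers vanish iff `sin(2t) = 0`.
-/

open scoped RealInnerProductSpace

/-- For a Clifford system on `ℝ^{2l}`, `x ∈ M₊`, a unit vector `a ∈ ℝ^{m+1}`
and `P := ∑ᵢ aⁱPᵢ`, the point `y = (cos t)x + (sin t)Px` lies in `M₊` iff `sin(2t) = 0`. -/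
theorem cliffordSystem_exp_mem_focal_iff
    (l m : ℕ) (hl : 1 ≤ l)
    (P : Fin (m + 1) → EuclideanSpace ℝ (Fin (2 * l)) →ₗ[ℝ] EuclideanSpace ℝ (Fin (2 * l)))
    (hsymm : ∀ i x y, ⟪P i x, y⟫ = ⟪x, P i y⟫)
    (horth : ∀ i x, ‖P i x‖ = ‖x‖)
    (hcliff : ∀ i j x, P i (P j x) + P j (P i x) = (if i = j then (2 : ℝ) else 0) • x)
    (x : EuclideanSpace ℝ (Fin (2 * l)))
    (hx1 : ‖x‖ = 1) (hx2 : ∀ i, ⟪P i x, x⟫ = 0)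
    (a : Fin (m + 1) → ℝ) (ha : ∑ i, (a i) ^ 2 = 1)
    (Pc : EuclideanSpace ℝ (Fin (2 * l)) →ₗ[ℝ] EuclideanSpace ℝ (Fin (2 * l)))
    (hPc : Pc = ∑ i, a i • P i)
    (t : ℝ) (y : EuclideanSpace ℝ (Fin (2 * l)))
    (hy : y = Real.cos t • x + Real.sin t • Pc x) :
    (‖y‖ = 1 ∧ ∀ i, ⟪P i y, y⟫ = 0) ↔ Real.sin (2 * t) = 0 := by
  have hPcx : ∀ z, Pc z = ∑ j, a j • P j z := by
    intro z; simp [hPc, LinearMap.sum_apply]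
  have hPs : ∀ u v, ⟪Pc u, v⟫ = ⟪u, Pc v⟫ := by
    intro u v
    simp only [hPcx, sum_inner, inner_sum, real_inner_smul_left, real_inner_smul_right, hsymm]
  have hanti : ∀ i z, P i (Pc z) + Pc (P i z) = (2 * a i) • z := by
    intro i z
    simp only [hPcx, map_sum, map_smul]
    rw [← Finset.sum_add_distrib]
    simp only [← smul_add, hcliff, smul_smul]
    simp [mul_comm]
  have hsq : ∀ z, Pc (Pc z) = z := by
    intro z
    have h : (2 : ℝ) • Pc (Pc z) = (2 : ℝ) • z := by
      calc (2 : ℝ) • Pc (Pc z) = ∑ j, a j • (P j (Pc z) + Pc (P j z)) := by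
            simp only [smul_add, Finset.sum_add_distrib]
            rw [two_smul, hPcx (Pc z)]
            congr 1
            rw [← hPcx (Pc z), hPcx z, map_sum]
            simp
        _ = (∑ j, 2 * (a j) ^ 2) • z := by
            rw [Finset.sum_smul]
            refine Finset.sum_congr rfl fun j _ => ?_
            rw [hanti, smul_smul]
            ring_nf
        _ = (2 : ℝ) • z := by rw [← Finset.mul_sum, ha, mul_one]
    exact smul_right_injective _ (two_ne_zero (α := ℝ)) h
  have hxx : ⟪x, x⟫ = 1 := by rw [real_inner_self_eq_norm_sq, hx1]; norm_num
  have hxP : ⟪x, Pc x⟫ = 0 := by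
    rw [← hPs, hPcx, sum_inner]
    simp [real_inner_smul_left, hx2]
  have hiP : ∀ i, ⟪P i x, Pc x⟫ = a i := by
    intro i
    -- both terms of `⟪(PᵢP + PPᵢ)x, x⟫` are equal to `⟪Pᵢx, Px⟫`
    have h := congrArg (fun v => ⟪v, x⟫) (hanti i x)
    simp only [inner_add_left, real_inner_smul_left, hxx] at h
    rw [hsymm, hPs (P i x) x, real_inner_comm (P i x) (Pc x)] at h
    linarith
  have hPiP : ∀ i, ⟪P i (Pc x), Pc x⟫ = 0 := by
    intro i
    rw [eq_sub_of_add_eq (hanti i x), inner_sub_left, real_inner_smul_left, hxP, hPs, hsq, hx2]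
    simp
  have hnorm : ‖y‖ = 1 := by
    have h : ‖y‖ ^ 2 = 1 := by
      rw [← real_inner_self_eq_norm_sq, hy]
      simp only [inner_add_left, inner_add_right, real_inner_smul_left, real_inner_smul_right,
        hPs, hsq, hxx, hxP]
      linarith [Real.sin_sq_add_cos_sq t]
    nlinarith [norm_nonneg y]
  have hform : ∀ i, ⟪P i y, y⟫ = Real.sin (2 * t) * a i := by
    intro i
    have h : ⟪P i (Pc x), x⟫ = a i := by rw [hsymm, real_inner_comm, hiP]
    rw [hy, Real.sin_two_mul]
    simp only [map_add, map_smul, inner_add_left, inner_add_right, real_inner_smul_left,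
      real_inner_smul_right, hx2, hiP, hPiP, h]
    ring
  constructor
  · rintro ⟨-, h⟩
    by_contra hs
    have ha0 : ∀ i, a i = 0 := fun i =>
      (mul_eq_zero.mp ((hform i).symm.trans (h i))).resolve_left hs
    simp [ha0] at ha
  · intro hs
    exact ⟨hnorm, fun i => by rw [hform, hs, zero_mul]⟩
end

section
/- Let P₀, …, P_m be a Clifford system on ℝ^{2l}, let x ∈ M₊, and let a, b ∈ ℝ^{m+1} be orthonormal vectors (∑ᵢ (aⁱ)² = ∑ᵢ (bⁱ)² = 1, ∑ᵢ aⁱbⁱ = 0). Set Q := ∑ᵢ aⁱPᵢ, P := ∑ᵢ bⁱPᵢ, and v := P(Qx). Then ⟨v, x⟩ = 0 and ⟨Pᵢv, x⟩ = 0 for every i = 0, …, m; that is, v is tangent to the variety M₊ at x. -/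
open scoped RealInnerProductSpace

/-!
Write `P` for `∑ᵢ bⁱPᵢ` (`Pc` below). By linearity the Clifford relations give `Pᵢ Q + Q Pᵢ = 2 aⁱ`,
`Pᵢ P + P Pᵢ = 2 bⁱ` and, since `a ⊥ b`, `P Q + Q P = 0`. All these operators are symmetric.

* The transpose of `P Q` is `Q P = - P Q`, so `P Q` is skew and `⟨P Q x, x⟩ = 0`.
* The transpose of `Pᵢ P Q` is `Q P Pᵢ`, and moving `Pᵢ` back to the left gives
  `Q P Pᵢ = - P Q Pᵢ = - 2 aⁱ P + 2 bⁱ Q - Pᵢ P Q`. Hence the symmetric part of `Pᵢ P Q` is the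
  linear combination `bⁱ Q - aⁱ P` of the `Pⱼ`, whose quadratic form vanishes at `x ∈ M₊`.
-/

/-- For a Clifford system on `ℝ^{2l}`, `x ∈ M₊`, orthonormal `a, b ∈ ℝ^{m+1}`,
`Q = ∑ᵢ aⁱPᵢ`, `P = ∑ᵢ bⁱPᵢ`, the vector `v = P(Qx)` is tangent to the variety `M₊` at `x`:
`⟨v, x⟩ = 0` and `⟨Pᵢv, x⟩ = 0` for all `i`. -/
theorem cliffordSystem_PQx_tangent
    (l m : ℕ) (hl : 1 ≤ l)
    (P : Fin (m + 1) → EuclideanSpace ℝ (Fin (2 * l)) →ₗ[ℝ] EuclideanSpace ℝ (Fin (2 * l)))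
    (hsymm : ∀ i x y, ⟪P i x, y⟫ = ⟪x, P i y⟫)
    (horth : ∀ i x, ‖P i x‖ = ‖x‖)
    (hcliff : ∀ i j x, P i (P j x) + P j (P i x) = (if i = j then (2 : ℝ) else 0) • x)
    (x : EuclideanSpace ℝ (Fin (2 * l)))
    (hx1 : ‖x‖ = 1) (hx2 : ∀ i, ⟪P i x, x⟫ = 0)
    (a b : Fin (m + 1) → ℝ)
    (ha : ∑ i, (a i) ^ 2 = 1) (hb : ∑ i, (b i) ^ 2 = 1) (hab : ∑ i, a i * b i = 0)
    (Q Pc : EuclideanSpace ℝ (Fin (2 * l)) →ₗ[ℝ] EuclideanSpace ℝ (Fin (2 * l)))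
    (hQ : Q = ∑ i, a i • P i) (hPc : Pc = ∑ i, b i • P i)
    (v : EuclideanSpace ℝ (Fin (2 * l))) (hv : v = Pc (Q x)) :
    ⟪v, x⟫ = 0 ∧ ∀ i, ⟪P i v, x⟫ = 0 := by
  have hQ' : ∀ y, Q y = ∑ i, a i • P i y := by intro y; simp [hQ]
  have hP' : ∀ y, Pc y = ∑ i, b i • P i y := by intro y; simp [hPc]
  have comb : ∀ (c : Fin (m + 1) → ℝ) i y,
      P i (∑ j, c j • P j y) + ∑ j, c j • P j (P i y) = (2 * c i) • y := by
    intro c i y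
    simp only [map_sum, map_smul]
    rw [← Finset.sum_add_distrib]
    simp only [← smul_add, hcliff, smul_smul, ← Finset.sum_smul]
    simp [mul_comm]
  have sym : ∀ (c : Fin (m + 1) → ℝ) y z,
      ⟪∑ j, c j • P j y, z⟫ = ⟪y, ∑ j, c j • P j z⟫ := by
    intro c y z
    simp only [sum_inner, inner_sum, real_inner_smul_left, real_inner_smul_right, hsymm]
  have van : ∀ c : Fin (m + 1) → ℝ, ⟪∑ j, c j • P j x, x⟫ = 0 := by
    intro c
    simp [sum_inner, real_inner_smul_left, hx2]
  have iQ : ∀ i y, P i (Q y) + Q (P i y) = (2 * a i) • y := by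
    intro i y; rw [hQ', hQ']; exact comb a i y
  have iP : ∀ i y, P i (Pc y) + Pc (P i y) = (2 * b i) • y := by
    intro i y; rw [hP', hP']; exact comb b i y
  have sQ : ∀ y z, ⟪Q y, z⟫ = ⟪y, Q z⟫ := by
    intro y z; rw [hQ', hQ']; exact sym a y z
  have sP : ∀ y z, ⟪Pc y, z⟫ = ⟪y, Pc z⟫ := by
    intro y z; rw [hP', hP']; exact sym b y z
  have vQ : ⟪Q x, x⟫ = 0 := by rw [hQ']; exact van a
  have vP : ⟪Pc x, x⟫ = 0 := by rw [hP']; exact van b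
  have anti : ∀ y, Pc (Q y) = -Q (Pc y) := by
    intro y
    rw [eq_neg_iff_add_eq_zero, hP' (Q y), hP' y]
    simp only [map_sum, map_smul]
    rw [← Finset.sum_add_distrib]
    simp only [← smul_add, iQ, smul_smul, ← Finset.sum_smul]
    have : ∑ i, b i * (2 * a i) = 2 * ∑ i, a i * b i := by
      rw [Finset.mul_sum]; exact Finset.sum_congr rfl fun i _ => by ring
    rw [this, hab, mul_zero, zero_smul]
  subst hv
  refine ⟨?_, fun i => ?_⟩
  · have h : ⟪Pc (Q x), x⟫ = -⟪Pc (Q x), x⟫ := by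
      conv_lhs => rw [sP, sQ, ← neg_neg (Q (Pc x)), ← anti, inner_neg_right, real_inner_comm]
    linarith
  · have e : Q (Pc (P i x)) = -(2 * a i) • Pc x + (2 * b i) • Q x - P i (Pc (Q x)) := by
      have h1 := anti (P i x)
      have h2 := congrArg Pc (iQ i x)
      have h3 := iP i (Q x)
      rw [map_add, map_smul] at h2
      rw [← h3, neg_smul, ← h2, h1]
      abel
    have h : ⟪P i (Pc (Q x)), x⟫ = ⟪Q (Pc (P i x)), x⟫ := by
      rw [hsymm, sP, sQ, real_inner_comm]
    rw [e, inner_sub_left, inner_add_left, real_inner_smul_left, real_inner_smul_left, vP, vQ] at h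
    linarith
end

section
/- Let P₀, …, P_m be a Clifford system on ℝ^{2l}. Define G : ℝ^{2l} → ℝ^{m+2} by G(x) := (‖x‖², ⟨P₀x, x⟩, …, ⟨P_mx, x⟩). Then at every point x ∈ M₊ the Fréchet derivative of G is surjective. (In particular, M₊ = G⁻¹(1, 0, …, 0) is a regular level set, hence a smooth submanifold of ℝ^{2l} of dimension 2l − m − 2 wherever it is nonempty.) -/
/-!
The derivative of `G` at `x` sends `w` to `(2⟪x, w⟫, 2⟪P₀x, w⟫, …, 2⟪P_mx, w⟫)`, by symmetry of the
`Pᵢ`. For `x ∈ M₊` the vectors `x, P₀x, …, P_mx` are orthonormal: `⟪Pᵢx, x⟫ = 0` defines `M₊`, and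
the Clifford relation paired with `x` gives `⟪Pᵢx, Pⱼx⟫ = δᵢⱼ`. Hence the target `y` is the image
of `(y₀ / 2) x + ∑ⱼ (yⱼ₊₁ / 2) Pⱼx`.
-/

open scoped RealInnerProductSpace

/-- For a Clifford system on `ℝ^{2l}`, the map
`G(x) = (‖x‖², ⟨P₀x, x⟩, …, ⟨P_mx, x⟩)` has surjective Fréchet derivative at every point of
`M₊`, so `M₊ = G⁻¹(1, 0, …, 0)` is a regular level set. -/
theorem cliffordSystem_focal_regular_level_set
    (l m : ℕ) (hl : 1 ≤ l)
    (P : Fin (m + 1) → EuclideanSpace ℝ (Fin (2 * l)) →ₗ[ℝ] EuclideanSpace ℝ (Fin (2 * l)))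
    (hsymm : ∀ i x y, ⟪P i x, y⟫ = ⟪x, P i y⟫)
    (horth : ∀ i x, ‖P i x‖ = ‖x‖)
    (hcliff : ∀ i j x, P i (P j x) + P j (P i x) = (if i = j then (2 : ℝ) else 0) • x)
    (G : EuclideanSpace ℝ (Fin (2 * l)) → (Fin (m + 2) → ℝ))
    (hG : G = fun x => Fin.cons (‖x‖ ^ 2) (fun i => ⟪P i x, x⟫))
    (x : EuclideanSpace ℝ (Fin (2 * l)))
    (hx1 : ‖x‖ = 1) (hx2 : ∀ i, ⟪P i x, x⟫ = 0) :
    Function.Surjective (fderiv ℝ G x) := by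
  have hgram : ∀ i j, ⟪P i x, P j x⟫ = if i = j then (1 : ℝ) else 0 := by
    intro i j
    have h := congrArg (fun v => ⟪x, v⟫) (hcliff i j x)
    simp only [inner_add_right, inner_smul_right, real_inner_self_eq_norm_sq, hx1] at h
    rw [← hsymm i x, ← hsymm j x, real_inner_comm (P i x) (P j x)] at h
    split_ifs at h ⊢ <;> linarith
  have hd : HasFDerivAt G (ContinuousLinearMap.pi
      (Fin.cons ((2 : ℝ) • innerSL ℝ x) (fun i => (2 : ℝ) • innerSL ℝ (P i x)))) x := by
    rw [hG, hasFDerivAt_pi']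
    intro k
    refine Fin.cases ?_ (fun i => ?_) k
    · refine (hasStrictFDerivAt_norm_sq x).hasFDerivAt.congr_fderiv ?_
      ext w
      simp
    · have h := ((P i).toContinuousLinearMap.hasFDerivAt (x := x)).inner ℝ (hasFDerivAt_id x)
      refine h.congr_fderiv ?_
      ext w
      simp [fderivInnerCLM_apply, hsymm i w x, real_inner_comm w (P i x)]
      ring
  rw [hd.fderiv]
  intro y
  refine ⟨(y 0 / 2) • x + ∑ j : Fin (m + 1), (y j.succ / 2) • P j x, ?_⟩
  ext k
  refine Fin.cases ?_ (fun i => ?_) k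
  · simp [inner_add_right, inner_sum, inner_smul_right, hx1, ← hsymm, hx2]
    ring
  · simp [inner_add_right, inner_sum, inner_smul_right, hx2, hgram]
    ring
end

section
/- Let P₀, …, P_m be a Clifford system on ℝ^{2l}, let e ∈ M₊, and set N := span{P₀e, …, P_me} and T := the orthogonal complement of span{e} ⊕ N in ℝ^{2l}. Let y ∈ T and w ∈ N with w ≠ 0. If t ∈ ℝ is such that z := t·e + y + w satisfies z/‖z‖ ∈ M₊, then 2t·‖w‖² = −∑ᵢ ⟨Pᵢe, w⟩·⟨Pᵢy, y⟩. In particular, for fixed y and w ≠ 0 there is at most one t ∈ ℝ such that t·e + y + w lies on the cone over M₊. -/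
/-!
Since the `Pᵢ` anticommute and square to the identity, the vectors `Pᵢe` are orthonormal, so
`w = ∑ᵢ cᵢ Pᵢe` with `cᵢ = ⟨Pᵢe, w⟩`. Put `Q = ∑ᵢ cᵢ Pᵢ`, a symmetric map with `Qe = w` and
`Q²e = ‖w‖² e` (`clifford_comb_sq`). For `z = te + y + w` on the cone, `⟨Qz, z⟩ = 0`. In the
expansion of this quadratic form

* `⟨Qe, e⟩ = 0` because `e ∈ M₊`, and `⟨Qe, y⟩ = 0` because `y ⟂ N`;
* `⟨Qw, w⟩ = ‖w‖² ⟨e, w⟩ = 0` and `⟨Qy, w⟩ = ⟨y, Q²e⟩ = ‖w‖² ⟨y, e⟩ = 0`;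

so only `⟨Qy, y⟩ + 2t ‖w‖² = 0` survives (`clifford_height`), which determines `t` when `w ≠ 0`.
-/

open scoped RealInnerProductSpace

section

variable {E : Type*} [NormedAddCommGroup E] [InnerProductSpace ℝ E]
  {ι : Type*} [DecidableEq ι]

lemma clifford_inner_orthonormal (P : ι → E →ₗ[ℝ] E)
    (hsymm : ∀ i x y, ⟪P i x, y⟫ = ⟪x, P i y⟫)
    (hcliff : ∀ i j x, P i (P j x) + P j (P i x) = (if i = j then (2 : ℝ) else 0) • x)
    (e : E) (he1 : ‖e‖ = 1) (i j : ι) :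
    ⟪P i e, P j e⟫ = if i = j then (1 : ℝ) else 0 := by
  have h := congrArg (fun v => ⟪e, v⟫) (hcliff i j e)
  simp only [inner_add_right, inner_smul_right, real_inner_self_eq_norm_sq, he1] at h
  rw [← hsymm i e (P j e), ← hsymm j e (P i e), real_inner_comm (P i e) (P j e)] at h
  split_ifs at h ⊢ <;> linarith

variable [Fintype ι]

/-- In the square of `∑ᵢ cᵢ Pᵢ` the cross terms cancel in pairs by anticommutation. -/
lemma clifford_comb_sq (P : ι → E →ₗ[ℝ] E)
    (hcliff : ∀ i j x, P i (P j x) + P j (P i x) = (if i = j then (2 : ℝ) else 0) • x)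
    (c : ι → ℝ) (x : E) :
    (∑ i, c i • P i) ((∑ i, c i • P i) x) = (∑ i, c i ^ 2) • x := by
  have h1 : (∑ i, c i • P i) ((∑ i, c i • P i) x)
      = ∑ i, ∑ j, (c i * c j) • P i (P j x) := by
    rw [LinearMap.sum_apply]
    simp only [LinearMap.smul_apply, LinearMap.sum_apply, map_sum, map_smul, smul_smul]
    exact Finset.sum_congr rfl fun i _ => Finset.sum_congr rfl fun j _ => by rw [mul_comm]
  have h2 : (∑ i, c i • P i) ((∑ i, c i • P i) x)
      = ∑ i, ∑ j, (c i * c j) • P j (P i x) := by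
    rw [h1, Finset.sum_comm]
    exact Finset.sum_congr rfl fun i _ => Finset.sum_congr rfl fun j _ => by rw [mul_comm]
  have h3 : (2 : ℝ) • (∑ i, c i • P i) ((∑ i, c i • P i) x)
      = (2 : ℝ) • (∑ i, c i ^ 2) • x := by
    rw [two_smul]
    nth_rewrite 1 [h1]
    rw [h2]
    simp only [← Finset.sum_add_distrib, ← smul_add, hcliff, ite_smul, smul_ite, zero_smul,
      smul_zero, smul_smul, Finset.sum_ite_eq, Finset.mem_univ, if_true]
    rw [Finset.mul_sum, Finset.sum_smul]
    exact Finset.sum_congr rfl fun i _ => by congr 1; ring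
  exact smul_right_injective E (two_ne_zero' ℝ) h3

/-- The height formula, for `z = te + y + w` in the common zero set of the quadratic forms
`⟨Pᵢz, z⟩`, that is, on the cone over `M₊`. -/
lemma clifford_height (P : ι → E →ₗ[ℝ] E)
    (hsymm : ∀ i x y, ⟪P i x, y⟫ = ⟪x, P i y⟫)
    (hcliff : ∀ i j x, P i (P j x) + P j (P i x) = (if i = j then (2 : ℝ) else 0) • x)
    (e : E) (he1 : ‖e‖ = 1) (he2 : ∀ i, ⟪P i e, e⟫ = 0)
    (y w : E) (hye : ⟪y, e⟫ = 0) (hyP : ∀ i, ⟪P i e, y⟫ = 0)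
    (hw : w ∈ Submodule.span ℝ (Set.range fun i => P i e)) (t : ℝ)
    (hz : ∀ i, ⟪P i (t • e + y + w), t • e + y + w⟫ = 0) :
    2 * t * ‖w‖ ^ 2 = -∑ i, ⟪P i e, w⟫ * ⟪P i y, y⟫ := by
  obtain ⟨c, hc⟩ := (Submodule.mem_span_range_iff_exists_fun ℝ).1 hw
  have hcoef : ∀ i, ⟪P i e, w⟫ = c i := fun i => by
    simp [← hc, inner_sum, inner_smul_right, clifford_inner_orthonormal P hsymm hcliff e he1]
  set Q : E →ₗ[ℝ] E := ∑ i, c i • P i with hQ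
  have hQinner : ∀ x x', ⟪Q x, x'⟫ = ∑ i, c i * ⟪P i x, x'⟫ := fun x x' => by
    simp [hQ, LinearMap.sum_apply, sum_inner, inner_smul_left]
  have hQsymm : ∀ x x', ⟪Q x, x'⟫ = ⟪x, Q x'⟫ := fun x x' => by
    rw [real_inner_comm (Q x') x, hQinner, hQinner]
    exact Finset.sum_congr rfl fun i _ => by rw [hsymm, real_inner_comm]
  have hQe : Q e = w := by simp [hQ, LinearMap.sum_apply, ← hc]
  have hQw : Q w = (∑ i, c i ^ 2) • e := by
    rw [← hQe]
    exact clifford_comb_sq P hcliff c e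
  have hwe : ⟪w, e⟫ = 0 := by rw [← hQe, hQinner]; simp [he2]
  have hwy : ⟪w, y⟫ = 0 := by rw [← hQe, hQinner]; simp [hyP]
  have hQz : ⟪Q (t • e + y + w), t • e + y + w⟫ = 0 := by rw [hQinner]; simp only [hz, mul_zero, Finset.sum_const_zero]
  have hQyw : ⟪Q y, w⟫ = 0 := by rw [hQsymm, hQw, inner_smul_right, hye, mul_zero]
  have hQye : ⟪Q y, e⟫ = 0 := by rw [hQsymm, hQe, real_inner_comm, hwy]
  have hee : ⟪e, e⟫ = (1 : ℝ) := by rw [real_inner_self_eq_norm_sq, he1, one_pow]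
  have hey : ⟪e, y⟫ = 0 := by rw [real_inner_comm, hye]
  have hew : ⟪e, w⟫ = 0 := by rw [real_inner_comm, hwe]
  -- `⟨Qw, e⟩ = ⟨w, Qe⟩` identifies the scalar in `Q²e` with `‖w‖²`.
  have hnorm : ∑ i, c i ^ 2 = ‖w‖ ^ 2 := by
    have h := hQsymm w e
    rwa [hQe, hQw, inner_smul_left, hee, real_inner_self_eq_norm_sq, mul_one] at h
  simp only [map_add, map_smul, hQe, hQw, inner_add_left, inner_add_right, inner_smul_left,
    inner_smul_right, hwe, hwy, hQyw, hQye, hee, hey, hew, hnorm, real_inner_self_eq_norm_sq,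
    conj_trivial] at hQz
  simp only [hcoef, ← hQinner]
  linarith

lemma inner_map_self_eq_zero_of_normalized (A : E →ₗ[ℝ] E) (z : E)
    (h : ⟪A (‖z‖⁻¹ • z), ‖z‖⁻¹ • z⟫ = 0) : ⟪A z, z⟫ = 0 := by
  rcases eq_or_ne z 0 with rfl | hz
  · simp
  · simpa [inner_smul_left, inner_smul_right, hz] using h

end

/-- With `e ∈ M₊`, `N = span{P₀e, …, P_me}`, `T = (ℝe ⊕ N)ᗮ`, `y ∈ T`,
`w ∈ N` nonzero: if `z = te + y + w` satisfies `z/‖z‖ ∈ M₊`, then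
`2t‖w‖² = -∑ᵢ ⟨Pᵢe, w⟩⟨Pᵢy, y⟩`; in particular such `t` is unique. -/
theorem cliffordSystem_cone_unique_height
    (l m : ℕ) (hl : 1 ≤ l)
    (P : Fin (m + 1) → EuclideanSpace ℝ (Fin (2 * l)) →ₗ[ℝ] EuclideanSpace ℝ (Fin (2 * l)))
    (hsymm : ∀ i x y, ⟪P i x, y⟫ = ⟪x, P i y⟫)
    (horth : ∀ i x, ‖P i x‖ = ‖x‖)
    (hcliff : ∀ i j x, P i (P j x) + P j (P i x) = (if i = j then (2 : ℝ) else 0) • x)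
    (e : EuclideanSpace ℝ (Fin (2 * l)))
    (he1 : ‖e‖ = 1) (he2 : ∀ i, ⟪P i e, e⟫ = 0)
    (N : Submodule ℝ (EuclideanSpace ℝ (Fin (2 * l))))
    (hN : N = Submodule.span ℝ (Set.range fun i => P i e))
    (T : Submodule ℝ (EuclideanSpace ℝ (Fin (2 * l))))
    (hT : T = (Submodule.span ℝ {e} ⊔ N)ᗮ)
    (y : EuclideanSpace ℝ (Fin (2 * l))) (hy : y ∈ T)
    (w : EuclideanSpace ℝ (Fin (2 * l))) (hw : w ∈ N) (hw0 : w ≠ 0)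
    (t : ℝ) (z : EuclideanSpace ℝ (Fin (2 * l))) (hz : z = t • e + y + w)
    (hmem : ‖(‖z‖⁻¹ • z)‖ = 1 ∧ ∀ i, ⟪P i (‖z‖⁻¹ • z), ‖z‖⁻¹ • z⟫ = 0) :
    2 * t * ‖w‖ ^ 2 = -∑ i, ⟪P i e, w⟫ * ⟪P i y, y⟫ ∧
      ∀ t' : ℝ,
        (‖(‖t' • e + y + w‖⁻¹ • (t' • e + y + w))‖ = 1 ∧
          ∀ i, ⟪P i (‖t' • e + y + w‖⁻¹ • (t' • e + y + w)),
            ‖t' • e + y + w‖⁻¹ • (t' • e + y + w)⟫ = 0) → t' = t := by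
  subst hz hT hN
  have hye : ⟪y, e⟫ = 0 := by
    rw [real_inner_comm]
    exact hy e (Submodule.mem_sup_left (Submodule.mem_span_singleton_self e))
  have hyP : ∀ i, ⟪P i e, y⟫ = 0 := fun i =>
    hy _ (Submodule.mem_sup_right (Submodule.subset_span ⟨i, rfl⟩))
  have key := clifford_height P hsymm hcliff e he1 he2 y w hye hyP hw
  have ht := key t fun i => inner_map_self_eq_zero_of_normalized _ _ (hmem.2 i)
  refine ⟨ht, fun t' h' => ?_⟩
  have ht' := key t' fun i => inner_map_self_eq_zero_of_normalized _ _ (h'.2 i)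
  have hpos : ‖w‖ ^ 2 ≠ 0 := pow_ne_zero 2 (norm_ne_zero_iff.2 hw0)
  have := mul_right_cancel₀ hpos (ht'.trans ht.symm)
  linarith
end

section
/- Let P₀, …, P_m be a Clifford system on ℝ^{2l}, let e ∈ M₊, and set N := span{P₀e, …, P_me} and T := the orthogonal complement of span{e} ⊕ N in ℝ^{2l}. Let y ∈ T and w ∈ N with w ≠ 0, and write wᵢ := ⟨Pᵢe, w⟩. Then there exists t ∈ ℝ such that (t·e + y + w)/‖t·e + y + w‖ ∈ M₊ if and only if for every i = 0, …, m: ‖w‖²·⟨Pᵢy, y⟩ − wᵢ·∑ⱼ wⱼ·⟨Pⱼy, y⟩ + 2‖w‖²·⟨Pᵢy, w⟩ = 0. (That is, the orthogonal projection of the cone over M₊ onto T ⊕ N is the variety carved out by these m + 1 equations.) -/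
/-!
Write `w = Q e` with `Q = ∑ⱼ wⱼ Pⱼ`, which is possible because the vectors `Pⱼ e` are orthonormal.
The Clifford relations give `Pᵢ Q + Q Pᵢ = 2 wᵢ`, hence `Q² = ‖w‖²`
and `Q Pᵢ Q = 2 wᵢ Q - ‖w‖² Pᵢ`. Since `⟨Q e, e⟩ = ⟨Pᵢ e, e⟩ = 0`, it follows that `⟨Pᵢ w, w⟩ = 0`,
so that for `x = t e + y + w`
`⟨Pᵢ x, x⟩ = 2 t wᵢ + ⟨Pᵢ y, y⟩ + 2 ⟨Pᵢ y, w⟩`.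
Moreover `∑ᵢ wᵢ ⟨Pᵢ y, w⟩ = ⟨y, Q² e⟩ = ‖w‖² ⟨y, e⟩ = 0`. Pairing the equations `⟨Pᵢ x, x⟩ = 0` with
`wᵢ` therefore forces `2 t ‖w‖² = -∑ⱼ wⱼ ⟨Pⱼ y, y⟩`, and eliminating `t` yields the stated system.
The vector `x` never vanishes, because `⟨x, w⟩ = ‖w‖² ≠ 0`.
-/

open scoped RealInnerProductSpace

/-- With `e ∈ M₊`, `N = span{P₀e, …, P_me}`, `T = (ℝe ⊕ N)ᗮ`, `y ∈ T`,
`w ∈ N` nonzero, and `wᵢ = ⟨Pᵢe, w⟩`: there is a `t` with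
`(te + y + w)/‖te + y + w‖ ∈ M₊` iff for every `i`,
`‖w‖²⟨Pᵢy, y⟩ − wᵢ∑ⱼ wⱼ⟨Pⱼy, y⟩ + 2‖w‖²⟨Pᵢy, w⟩ = 0`. -/
theorem cliffordSystem_cone_projection_variety
    (l m : ℕ) (hl : 1 ≤ l)
    (P : Fin (m + 1) → EuclideanSpace ℝ (Fin (2 * l)) →ₗ[ℝ] EuclideanSpace ℝ (Fin (2 * l)))
    (hsymm : ∀ i x y, ⟪P i x, y⟫ = ⟪x, P i y⟫)
    (horth : ∀ i x, ‖P i x‖ = ‖x‖)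
    (hcliff : ∀ i j x, P i (P j x) + P j (P i x) = (if i = j then (2 : ℝ) else 0) • x)
    (e : EuclideanSpace ℝ (Fin (2 * l)))
    (he1 : ‖e‖ = 1) (he2 : ∀ i, ⟪P i e, e⟫ = 0)
    (N : Submodule ℝ (EuclideanSpace ℝ (Fin (2 * l))))
    (hN : N = Submodule.span ℝ (Set.range fun i => P i e))
    (T : Submodule ℝ (EuclideanSpace ℝ (Fin (2 * l))))
    (hT : T = (Submodule.span ℝ {e} ⊔ N)ᗮ)
    (y : EuclideanSpace ℝ (Fin (2 * l))) (hy : y ∈ T)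
    (w : EuclideanSpace ℝ (Fin (2 * l))) (hw : w ∈ N) (hw0 : w ≠ 0) :
    (∃ t : ℝ,
        ‖(‖t • e + y + w‖⁻¹ • (t • e + y + w))‖ = 1 ∧
          ∀ i, ⟪P i (‖t • e + y + w‖⁻¹ • (t • e + y + w)),
            ‖t • e + y + w‖⁻¹ • (t • e + y + w)⟫ = 0) ↔
      ∀ i, ‖w‖ ^ 2 * ⟪P i y, y⟫ - ⟪P i e, w⟫ * (∑ j, ⟪P j e, w⟫ * ⟪P j y, y⟫) +
        2 * ‖w‖ ^ 2 * ⟪P i y, w⟫ = 0 := by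
  have hye : ⟪y, e⟫ = 0 := by
    rw [hT, Submodule.mem_orthogonal'] at hy
    exact hy e (Submodule.mem_sup_left (Submodule.mem_span_singleton_self e))
  have hyN : ∀ v ∈ N, ⟪y, v⟫ = 0 := by
    rw [hT, Submodule.mem_orthogonal'] at hy
    exact fun v hv => hy v (Submodule.mem_sup_right hv)
  have hPN : ∀ i, P i e ∈ N := fun i => hN ▸ Submodule.subset_span ⟨i, rfl⟩
  have hew : ∀ v ∈ N, ⟪v, e⟫ = 0 := by
    intro v hv
    rw [hN] at hv
    induction hv using Submodule.span_induction with
    | mem x hx => obtain ⟨i, rfl⟩ := hx; exact he2 i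
    | zero => simp
    | add a b _ _ ha hb => rw [inner_add_left, ha, hb, add_zero]
    | smul r a _ ha => rw [inner_smul_left, ha, mul_zero]
  have hort : ∀ i j, ⟪P i e, P j e⟫ = if i = j then (1 : ℝ) else 0 := by
    intro i j
    have h := congrArg (fun v => ⟪e, v⟫) (hcliff i j e)
    simp only [inner_add_right, inner_smul_right, real_inner_self_eq_norm_sq, he1] at h
    rw [← hsymm i e (P j e), ← hsymm j e (P i e), real_inner_comm (P i e) (P j e)] at h
    split_ifs at h ⊢ <;> linarith
  obtain ⟨c, hc⟩ : ∃ c : Fin (m + 1) → ℝ, ∑ i, c i • P i e = w := by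
    rw [hN] at hw
    exact (Submodule.mem_span_range_iff_exists_fun ℝ).1 hw
  have hwc : ∀ i, ⟪P i e, w⟫ = c i := by
    intro i
    simp [← hc, inner_sum, inner_smul_right, hort]
  have hsq : ∑ i, c i * c i = ‖w‖ ^ 2 := by
    rw [← real_inner_self_eq_norm_sq]
    nth_rewrite 2 [← hc]
    simp [inner_sum, real_inner_smul_right, real_inner_comm (P _ e) w, hwc]
  let Q := ∑ j, c j • P j
  have hQ : ∀ x, Q x = ∑ j, c j • P j x := fun x => by simp [Q, LinearMap.sum_apply]
  have hQe : Q e = w := by rw [hQ, hc]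
  have hQs : ∀ x z, ⟪Q x, z⟫ = ⟪x, Q z⟫ := by
    intro x z
    simp [hQ, sum_inner, inner_sum, inner_smul_left, inner_smul_right, hsymm]
  have hPQ : ∀ i x, P i (Q x) + Q (P i x) = (2 * c i) • x := by
    intro i x
    simp only [hQ, map_sum, map_smul]
    rw [← Finset.sum_add_distrib]
    simp only [← smul_add, hcliff]
    simp [smul_smul, mul_comm]
  -- Multiplying `Pⱼ Q + Q Pⱼ = 2 cⱼ` by `cⱼ` and summing gives `2 Q² = 2 ‖w‖²`.
  have hQQ : Q w = ‖w‖ ^ 2 • e := by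
    have h : Q (Q e) + Q (Q e) = (2 * ‖w‖ ^ 2) • e := by
      calc Q (Q e) + Q (Q e) = ∑ j, c j • (P j (Q e) + Q (P j e)) := by
            simp only [smul_add, Finset.sum_add_distrib]
            rw [← hQ (Q e)]
            congr 1
            conv_lhs => rw [hQ e, map_sum]
            simp only [map_smul]
        _ = (2 * ‖w‖ ^ 2) • e := by
            simp only [hPQ, smul_smul]
            rw [← Finset.sum_smul, ← hsq, Finset.mul_sum]
            congr 1
            exact Finset.sum_congr rfl fun i _ => by ring
    rw [hQe, ← two_smul ℝ, mul_smul] at h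
    exact smul_right_injective _ (two_ne_zero' ℝ) h
  -- `⟨Pᵢ w, w⟩ = ⟨Q Pᵢ w, e⟩`, and `Q Pᵢ w = 2 cᵢ w - ‖w‖² Pᵢ e` is orthogonal to `e`.
  have hPw : ∀ i, ⟪P i w, w⟫ = 0 := by
    intro i
    have h1 := hPQ i w
    have h2 : ⟪P i w, w⟫ = ⟪Q (P i w), e⟫ := by rw [hQs, hQe]
    rw [h2, eq_sub_of_add_eq' h1, hQQ, map_smul, inner_sub_left, inner_smul_left,
      inner_smul_left, hew w hw, he2]
    simp
  -- The left side is `⟨Q y, w⟩ = ⟨y, Q w⟩`, and `Q w` is a multiple of `e`.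
  have hb : ∑ i, c i * ⟪P i y, w⟫ = 0 := by
    have h : ⟪Q y, w⟫ = 0 := by rw [hQs, hQQ, inner_smul_right, hye, mul_zero]
    simpa [hQ, sum_inner, inner_smul_left] using h
  have hexp : ∀ (t : ℝ) i, ⟪P i (t • e + y + w), t • e + y + w⟫ =
      2 * t * c i + ⟪P i y, y⟫ + 2 * ⟪P i y, w⟫ := by
    intro t i
    have h1 : ⟪P i e, y⟫ = 0 := by rw [real_inner_comm]; exact hyN _ (hPN i)
    have h2 : ⟪P i y, e⟫ = 0 := by rw [hsymm]; exact hyN _ (hPN i)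
    have h3 : ⟪P i w, e⟫ = c i := by rw [hsymm, real_inner_comm, hwc]
    have h4 : ⟪P i w, y⟫ = ⟪P i y, w⟫ := by rw [hsymm, real_inner_comm]
    simp only [map_add, map_smul, inner_add_left, inner_add_right, real_inner_smul_left,
      real_inner_smul_right, he2, h1, h2, h3, h4, hPw, hwc]
    ring
  have hne : ∀ t : ℝ, ‖t • e + y + w‖ ≠ 0 := by
    intro t h
    have h0 : ⟪t • e + y + w, w⟫ = 0 := by rw [norm_eq_zero.1 h, inner_zero_left]
    rw [inner_add_left, inner_add_left, real_inner_smul_left, real_inner_comm, hew w hw,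
      hyN w hw, real_inner_self_eq_norm_sq] at h0
    exact hw0 (by simpa using h0)
  have hw2 : ‖w‖ ^ 2 ≠ 0 := pow_ne_zero 2 (norm_ne_zero_iff.2 hw0)
  have hcone : ∀ t : ℝ, (‖(‖t • e + y + w‖⁻¹ • (t • e + y + w))‖ = 1 ∧
          ∀ i, ⟪P i (‖t • e + y + w‖⁻¹ • (t • e + y + w)),
            ‖t • e + y + w‖⁻¹ • (t • e + y + w)⟫ = 0) ↔
      ∀ i, 2 * t * c i + ⟪P i y, y⟫ + 2 * ⟪P i y, w⟫ = 0 := by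
    intro t
    rw [norm_smul, norm_inv, norm_norm, inv_mul_cancel₀ (hne t)]
    simp only [map_smul, real_inner_smul_left, real_inner_smul_right, hexp, mul_eq_zero,
      inv_eq_zero, hne t, false_or, true_and]
  simp only [hcone, hwc]
  constructor
  · rintro ⟨t, ht⟩ i
    have hsum : 2 * t * ‖w‖ ^ 2 + ∑ j, c j * ⟪P j y, y⟫ = 0 := by
      have h : ∑ j, c j * (2 * t * c j + ⟪P j y, y⟫ + 2 * ⟪P j y, w⟫) = 0 := by simp [ht]
      have h' : ∑ j, c j * (2 * t * c j + ⟪P j y, y⟫ + 2 * ⟪P j y, w⟫) =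
          2 * t * ∑ j, c j * c j + ∑ j, c j * ⟪P j y, y⟫ + 2 * ∑ j, c j * ⟪P j y, w⟫ := by
        simp only [Finset.mul_sum, ← Finset.sum_add_distrib]
        exact Finset.sum_congr rfl fun j _ => by ring
      rw [h', hsq, hb] at h
      linarith
    linear_combination ‖w‖ ^ 2 * ht i - c i * hsum
  · intro h
    refine ⟨-(∑ j, c j * ⟪P j y, y⟫) / (2 * ‖w‖ ^ 2), fun i => ?_⟩
    have hi := h i
    field_simp
    linear_combination hi
end

section
/- Let P₀, …, P_m be a Clifford system on ℝ^{2l} and define the Ferus–Karcher–Münzner polynomial F : ℝ^{2l} → ℝ by F(x) := ‖x‖⁴ − 2·∑ᵢ ⟨Pᵢx, x⟩². Then the gradient of F satisfies the first Cartan–Münzner equation ‖∇F(x)‖² = 16·‖x‖⁶ for every x ∈ ℝ^{2l}. -/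
/-!
Writing `‖x‖⁴ = ⟪x, x⟫²`, the polynomial is a combination of squares of quadratic forms, and
`⟪A x, x⟫²` has gradient `4⟪A x, x⟫ A x` for symmetric `A` (`hasFDerivAt_quadForm_sq`), so
`∇F(x) = 4‖x‖² x − 8 ∑ᵢ aᵢ Pᵢ x` with `aᵢ = ⟪Pᵢ x, x⟫`. The vectors `Pᵢ x` are pairwise
orthogonal of length `‖x‖`: symmetry and anticommutation give `2⟪Pᵢ x, Pⱼ x⟫ = 0` for `i ≠ j`.
Expanding the square,
`‖∇F(x)‖² = 16‖x‖⁶ − 64‖x‖² ∑ᵢ aᵢ² + 64‖x‖² ∑ᵢ aᵢ²`, and the last two terms cancel.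
-/

open scoped RealInnerProductSpace

/-- The gradient of the squared quadratic form of a symmetric operator, written as the functional
`⟪4⟪A x, x⟫ A x, ·⟫` so that it can be combined with the calculus of `HasFDerivAt`. -/
theorem hasFDerivAt_quadForm_sq {n : ℕ}
    (A : EuclideanSpace ℝ (Fin n) →ₗ[ℝ] EuclideanSpace ℝ (Fin n))
    (hA : ∀ x y, ⟪A x, y⟫ = ⟪x, A y⟫) (x : EuclideanSpace ℝ (Fin n)) :
    HasFDerivAt (fun y => ⟪A y, y⟫ ^ 2) (innerSL ℝ ((4 * ⟪A x, x⟫) • A x)) x := by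
  have h := (((LinearMap.toContinuousLinearMap A).hasFDerivAt (x := x)).inner ℝ
    (hasFDerivAt_id x)).pow 2
  refine HasFDerivAt.congr_fderiv h ?_
  ext v
  have h1 : ⟪A v, x⟫ = ⟪A x, v⟫ := by rw [hA, real_inner_comm]
  simp [h1]
  ring

/-- For a Clifford system, `P₀ x, …, P_m x` are pairwise orthogonal of length `‖x‖`. -/
theorem inner_clifford {n m : ℕ}
    (P : Fin (m + 1) → EuclideanSpace ℝ (Fin n) →ₗ[ℝ] EuclideanSpace ℝ (Fin n))
    (hsymm : ∀ i x y, ⟪P i x, y⟫ = ⟪x, P i y⟫)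
    (horth : ∀ i x, ‖P i x‖ = ‖x‖)
    (hcliff : ∀ i j x, P i (P j x) + P j (P i x) = (if i = j then (2 : ℝ) else 0) • x)
    (x : EuclideanSpace ℝ (Fin n)) (i j : Fin (m + 1)) :
    ⟪P i x, P j x⟫ = if i = j then ‖x‖ ^ 2 else 0 := by
  split_ifs with hij
  · rw [hij, real_inner_self_eq_norm_sq, horth]
  · have h := congrArg (fun v => ⟪x, v⟫) (hcliff i j x)
    simp only [if_neg hij, zero_smul, inner_zero_right, inner_add_right] at h
    rw [← hsymm i x (P j x), ← hsymm j x (P i x), real_inner_comm (P i x) (P j x)] at h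
    linarith

/-- For a Clifford system on `ℝ^{2l}`, the Ferus–Karcher–Münzner polynomial
`F(x) = ‖x‖⁴ − 2∑ᵢ ⟨Pᵢx, x⟩²` satisfies the first Cartan–Münzner equation
`‖∇F(x)‖² = 16‖x‖⁶`. -/
theorem FKM_polynomial_first_CartanMunzner
    (l m : ℕ) (hl : 1 ≤ l)
    (P : Fin (m + 1) → EuclideanSpace ℝ (Fin (2 * l)) →ₗ[ℝ] EuclideanSpace ℝ (Fin (2 * l)))
    (hsymm : ∀ i x y, ⟪P i x, y⟫ = ⟪x, P i y⟫)
    (horth : ∀ i x, ‖P i x‖ = ‖x‖)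
    (hcliff : ∀ i j x, P i (P j x) + P j (P i x) = (if i = j then (2 : ℝ) else 0) • x)
    (F : EuclideanSpace ℝ (Fin (2 * l)) → ℝ)
    (hF : F = fun x => ‖x‖ ^ 4 - 2 * ∑ i, ⟪P i x, x⟫ ^ 2) :
    ∀ x, ‖gradient F x‖ ^ 2 = 16 * ‖x‖ ^ 6 := by
  intro x
  set S := ∑ i, ⟪P i x, x⟫ • P i x with hS
  have hgrad : HasGradientAt F ((4 * ‖x‖ ^ 2) • x - (8 : ℝ) • S) x := by
    rw [hasGradientAt_iff_hasFDerivAt]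
    have h := (hasFDerivAt_quadForm_sq LinearMap.id (fun _ _ => rfl) x).sub
      ((HasFDerivAt.fun_sum (u := Finset.univ)
        (fun i _ => hasFDerivAt_quadForm_sq (P i) (hsymm i) x)).const_mul 2)
    have hF' : F = (fun y => ⟪LinearMap.id (R := ℝ) y, y⟫ ^ 2) -
        fun y => 2 * ∑ i, ⟪P i y, y⟫ ^ 2 := by
      rw [hF]
      funext y
      simp only [Pi.sub_apply, LinearMap.id_apply, real_inner_self_eq_norm_sq]
      ring
    rw [hF']
    refine HasFDerivAt.congr_fderiv h ?_
    ext v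
    simp only [hS, sub_apply, smul_apply,
      sum_apply, innerSL_apply_apply, InnerProductSpace.toDual_apply_apply,
      LinearMap.id_apply, inner_sub_left, real_inner_smul_left, sum_inner, smul_eq_mul,
      real_inner_self_eq_norm_sq, Finset.mul_sum]
    congr 1
    exact Finset.sum_congr rfl fun i _ => by ring
  have hxS : ⟪x, S⟫ = ∑ i, ⟪P i x, x⟫ ^ 2 := by
    simp only [hS, inner_sum, real_inner_smul_right]
    exact Finset.sum_congr rfl fun i _ => by rw [real_inner_comm (P i x) x, sq]
  have hSS : ‖S‖ ^ 2 = ‖x‖ ^ 2 * ∑ i, ⟪P i x, x⟫ ^ 2 := by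
    rw [← real_inner_self_eq_norm_sq]
    simp only [hS, inner_sum, sum_inner, real_inner_smul_right, real_inner_smul_left,
      inner_clifford P hsymm horth hcliff x, mul_ite, mul_zero,
      Finset.sum_ite_eq', Finset.mem_univ, if_true, Finset.mul_sum]
    exact Finset.sum_congr rfl fun i _ => by ring
  rw [hgrad.gradient, norm_sub_sq_real, norm_smul, norm_smul, mul_pow, mul_pow, hSS,
    real_inner_smul_left, real_inner_smul_right, hxS, Real.norm_eq_abs, Real.norm_eq_abs,
    sq_abs, sq_abs]
  ring
end

section
/- Let P₀, …, P_m be a Clifford system on ℝ^{2l} with m ≥ 1 and define F : ℝ^{2l} → ℝ by F(x) := ‖x‖⁴ − 2·∑ᵢ ⟨Pᵢx, x⟩². Then the Laplacian of F satisfies the second Cartan–Münzner equation ΔF(x) = 8·(l − 2m − 1)·‖x‖² for every x ∈ ℝ^{2l} (i.e., ΔF = 8(m₂ − m₁)‖x‖² with multiplicities m₁ = m and m₂ = l − m − 1). -/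
open scoped RealInnerProductSpace

/-!
For a symmetric operator `A`, the quartic `x ↦ ⟪A x, x⟫²` has second derivative
`8 ⟪A x, e⟫² + 4 ⟪A x, x⟫ ⟪A e, e⟫` in the direction `e`
(`hasFDerivAt_quadratic_sq`, `hasFDerivAt_gradient_quadratic_sq`), so summing over an orthonormal
basis gives its Laplacian `8 ‖A x‖² + 4 ⟪A x, x⟫ tr A`. The polynomial `F` is a combination of such
quartics: `A = id` gives `‖x‖⁴`, with Laplacian `(8 + 8l) ‖x‖²`, and each `A = Pᵢ` contributes
`8 ‖x‖²`, since `Pᵢ` is orthogonal and traceless (`trace_eq_zero_of_anticomm`). The latter uses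
`m ≥ 1`: conjugating `Pᵢ` by some `Pⱼ` with `j ≠ i` changes its sign but preserves its trace.
-/

section

variable {E : Type*} [NormedAddCommGroup E] [InnerProductSpace ℝ E]

/-- The gradient of `x ↦ ⟪A x, x⟫²` is `4 ⟪A x, x⟫ A x` for symmetric `A`. -/
lemma hasFDerivAt_quadratic_sq (A : E →L[ℝ] E) (hA : ∀ x y, ⟪A x, y⟫ = ⟪x, A y⟫) (x : E) :
    HasFDerivAt (fun z => ⟪A z, z⟫ ^ 2) ((4 * ⟪A x, x⟫) • innerSL ℝ (A x)) x := by
  have h := ((A.hasFDerivAt (x := x)).inner ℝ (hasFDerivAt_id x)).pow 2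
  refine h.congr_fderiv ?_
  ext v
  have hs : ⟪A v, x⟫ = ⟪A x, v⟫ := by rw [hA, real_inner_comm]
  simp [hs]
  ring

/-- The derivative in the direction `e` of the `e`-component of the gradient of `x ↦ ⟪A x, x⟫²`. -/
lemma hasFDerivAt_gradient_quadratic_sq (A : E →L[ℝ] E) (hA : ∀ x y, ⟪A x, y⟫ = ⟪x, A y⟫)
    (x e : E) :
    ∃ L : E →L[ℝ] ℝ, HasFDerivAt (fun z => 4 * ⟪A z, z⟫ * ⟪A z, e⟫) L x ∧
      L e = 8 * ⟪A x, e⟫ ^ 2 + 4 * ⟪A x, x⟫ * ⟪e, A e⟫ := by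
  have h := (((A.hasFDerivAt (x := x)).inner ℝ (hasFDerivAt_id x)).const_mul 4).mul
    ((A.hasFDerivAt (x := x)).inner ℝ (hasFDerivAt_const e x))
  refine ⟨_, h, ?_⟩
  have hs : ⟪A e, x⟫ = ⟪A x, e⟫ := by rw [hA, real_inner_comm]
  have hs' : ⟪A e, e⟫ = ⟪e, A e⟫ := hA e e
  simp [hs, hs']
  ring

end

/-- An operator anticommuting with an involution is traceless. -/
lemma trace_eq_zero_of_anticomm {V : Type*} [AddCommGroup V] [Module ℝ V]
    (A B : V →ₗ[ℝ] V) (hB : B * B = 1) (hAB : A * B = -(B * A)) :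
    LinearMap.trace ℝ V A = 0 := by
  have h1 : LinearMap.trace ℝ V (B * (A * B)) = LinearMap.trace ℝ V A := by
    rw [LinearMap.trace_mul_comm, mul_assoc, hB, mul_one]
  have h2 : B * (A * B) = -A := by
    rw [hAB, mul_neg, ← mul_assoc, hB, one_mul]
  rw [h2, map_neg] at h1
  linarith

/-- For a Clifford system on `ℝ^{2l}` with `m ≥ 1`, the
Ferus–Karcher–Münzner polynomial `F(x) = ‖x‖⁴ − 2∑ᵢ ⟨Pᵢx, x⟩²` satisfies the second
Cartan–Münzner equation `ΔF(x) = 8(l − 2m − 1)‖x‖²`, where the Laplacian is the sum of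
the second partial derivatives in an orthonormal coordinate basis. -/
theorem FKM_polynomial_second_CartanMunzner
    (l m : ℕ) (hl : 1 ≤ l) (hm : 1 ≤ m)
    (P : Fin (m + 1) → EuclideanSpace ℝ (Fin (2 * l)) →ₗ[ℝ] EuclideanSpace ℝ (Fin (2 * l)))
    (hsymm : ∀ i x y, ⟪P i x, y⟫ = ⟪x, P i y⟫)
    (horth : ∀ i x, ‖P i x‖ = ‖x‖)
    (hcliff : ∀ i j x, P i (P j x) + P j (P i x) = (if i = j then (2 : ℝ) else 0) • x)
    (F : EuclideanSpace ℝ (Fin (2 * l)) → ℝ)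
    (hF : F = fun x => ‖x‖ ^ 4 - 2 * ∑ i, ⟪P i x, x⟫ ^ 2) :
    ∀ x, ∑ k : Fin (2 * l),
        fderiv ℝ (fun z => fderiv ℝ F z (EuclideanSpace.single k 1)) x
          (EuclideanSpace.single k 1) =
      8 * ((l : ℝ) - 2 * m - 1) * ‖x‖ ^ 2 := by
  intro x
  set b := EuclideanSpace.basisFun (Fin (2 * l)) ℝ with hb
  have hbk : ∀ k, EuclideanSpace.single k (1 : ℝ) = b k := fun k => by simp [hb]
  simp only [hbk]
  let Q : Fin (m + 1) → EuclideanSpace ℝ (Fin (2 * l)) →L[ℝ] EuclideanSpace ℝ (Fin (2 * l)) :=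
    fun i => (P i).toContinuousLinearMap
  have hQ : ∀ i x y, ⟪Q i x, y⟫ = ⟪x, Q i y⟫ := hsymm
  let I := ContinuousLinearMap.id ℝ (EuclideanSpace ℝ (Fin (2 * l)))
  have hI : ∀ x y, ⟪I x, y⟫ = ⟪x, I y⟫ := fun _ _ => rfl
  have hF' : F = fun x => ⟪I x, x⟫ ^ 2 - 2 * ∑ i, ⟪Q i x, x⟫ ^ 2 := by
    rw [hF]
    funext x
    have : ⟪I x, x⟫ = ‖x‖ ^ 2 := real_inner_self_eq_norm_sq x
    rw [this, ← pow_mul]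
    rfl
  have hgrad : ∀ z e, fderiv ℝ F z e =
      4 * ⟪I z, z⟫ * ⟪I z, e⟫ - 2 * ∑ i, 4 * ⟪Q i z, z⟫ * ⟪Q i z, e⟫ := by
    intro z e
    have h := (hasFDerivAt_quadratic_sq I hI z).sub
      ((HasFDerivAt.fun_sum (u := Finset.univ)
        fun i _ => hasFDerivAt_quadratic_sq (Q i) (hQ i) z).const_mul 2)
    have h' : HasFDerivAt F _ z := h.congr_of_eventuallyEq (.of_forall fun y => congrFun hF' y)
    rw [h'.fderiv]
    simp [mul_assoc]
  have hsecond : ∀ e, fderiv ℝ (fun z => fderiv ℝ F z e) x e =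
      (8 * ⟪I x, e⟫ ^ 2 + 4 * ⟪I x, x⟫ * ⟪e, I e⟫) -
        2 * ∑ i, (8 * ⟪Q i x, e⟫ ^ 2 + 4 * ⟪Q i x, x⟫ * ⟪e, Q i e⟫) := by
    intro e
    simp only [hgrad]
    obtain ⟨L, hL, hLe⟩ := hasFDerivAt_gradient_quadratic_sq I hI x e
    choose M hM hMe using fun i => hasFDerivAt_gradient_quadratic_sq (Q i) (hQ i) x e
    have h := hL.fun_sub ((HasFDerivAt.fun_sum (u := Finset.univ) fun i _ => hM i).const_mul 2)
    rw [h.fderiv]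
    simp [hLe, hMe]
  have htrace : ∀ i, ∑ k, ⟪b k, Q i (b k)⟫ = 0 := by
    intro i
    -- `m ≥ 1` provides a second index.
    have : Nontrivial (Fin (m + 1)) := Fin.nontrivial_iff_two_le.2 (by omega)
    obtain ⟨j, hj⟩ := exists_ne i
    rw [← trace_eq_zero_of_anticomm (P i) (P j), LinearMap.trace_eq_sum_inner (P i) b]
    · rfl
    · ext1 v
      have h := hcliff j j v
      rw [if_pos rfl, ← two_smul ℝ] at h
      exact smul_right_injective _ (two_ne_zero' ℝ) h
    · ext1 v
      have h := hcliff i j v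
      rw [if_neg hj.symm, zero_smul] at h
      exact eq_neg_of_add_eq_zero_left h
  have hlap : ∀ A : EuclideanSpace ℝ (Fin (2 * l)) →L[ℝ] EuclideanSpace ℝ (Fin (2 * l)),
      ∑ k, (8 * ⟪A x, b k⟫ ^ 2 + 4 * ⟪A x, x⟫ * ⟪b k, A (b k)⟫) =
        8 * ‖A x‖ ^ 2 + 4 * ⟪A x, x⟫ * ∑ k, ⟪b k, A (b k)⟫ := by
    intro A
    rw [Finset.sum_add_distrib, ← Finset.mul_sum, ← Finset.mul_sum, b.sum_sq_inner_left]
  have hnorm : ∀ i, ‖Q i x‖ = ‖x‖ := fun i => horth i x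
  have htraceI : ∑ k, ⟪b k, I (b k)⟫ = 2 * (l : ℝ) := by simp [I]
  have hIx : I x = x := rfl
  simp only [hsecond]
  rw [Finset.sum_sub_distrib, ← Finset.mul_sum, Finset.sum_comm, hlap I]
  simp only [hlap, htrace, htraceI, hnorm, hIx, real_inner_self_eq_norm_sq]
  simp
  ring
end

section
/- Let P₀, …, P_m be a Clifford system on ℝ^{2l}, let e ∈ M₊, and set N := span{P₀e, …, P_me} and T := the orthogonal complement of span{e} ⊕ N in ℝ^{2l}. Let y ∈ T, w ∈ N with w ≠ 0, and suppose t ∈ ℝ is such that (t·e + y + w)/‖t·e + y + w‖ ∈ M₊. Write wᵢ := ⟨Pᵢe, w⟩. Then the quadratic polynomial q(s) := 4‖w‖²·s² + 4·(∑ᵢ wᵢ·(⟨Pᵢy, y⟩ + 2⟨Pᵢy, w⟩))·s + ∑ᵢ (⟨Pᵢy, y⟩ + 2⟨Pᵢy, w⟩)² satisfies q(s) = 4‖w‖²·(s − t)² for all s ∈ ℝ; in particular t is a double root of q. -/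
/-!
Membership in the cone is homogeneous, so it says `⟪P i z, z⟫ = 0` for `z = t e + y + w` and all `i`.
Expanding, the terms `⟪P i e, e⟫` and `⟪P i e, y⟫` vanish, and so does `⟪P i w, w⟫`, because `P i` maps
`N` into `Nᗮ` (`inner_clifford_normal_eq_zero`). What remains is
`⟪P i y, y⟫ + 2 ⟪P i y, w⟫ = -2 t ⟪P i e, w⟫`. The vectors `P i e` form an orthonormal basis of `N`, so
`∑ i, ⟪P i e, w⟫ ^ 2 = ‖w‖ ^ 2`, and substituting both identities gives `q(s) = 4 ‖w‖² (s - t)²`.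
-/

open scoped RealInnerProductSpace

section
variable {E ι : Type*} [NormedAddCommGroup E] [InnerProductSpace ℝ E]

lemma inner_clifford_orthonormal [DecidableEq ι] (P : ι → E →ₗ[ℝ] E)
    (hsymm : ∀ i x y, ⟪P i x, y⟫ = ⟪x, P i y⟫)
    (hcliff : ∀ i j x, P i (P j x) + P j (P i x) = (if i = j then (2 : ℝ) else 0) • x)
    {e : E} (he1 : ‖e‖ = 1) (i j : ι) :
    ⟪P i e, P j e⟫ = if i = j then (1 : ℝ) else 0 := by
  have h := congrArg (fun v => ⟪e, v⟫) (hcliff i j e)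
  simp only [inner_add_right, inner_smul_right, real_inner_self_eq_norm_sq, he1] at h
  rw [← hsymm i e, ← hsymm j e, real_inner_comm (P i e) (P j e)] at h
  split_ifs at h ⊢ <;> linarith

/-- `P i` maps the span of the `P j e` into its orthogonal complement: `⟪P i (P j e), P k e⟫` is
symmetric in `j, k` because `P i` is symmetric, and antisymmetric by the Clifford relations and
`⟪P i e, e⟫ = 0`. -/
lemma inner_clifford_normal_eq_zero [DecidableEq ι] (P : ι → E →ₗ[ℝ] E)
    (hsymm : ∀ i x y, ⟪P i x, y⟫ = ⟪x, P i y⟫)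
    (hcliff : ∀ i j x, P i (P j x) + P j (P i x) = (if i = j then (2 : ℝ) else 0) • x)
    {e : E} (he2 : ∀ i, ⟪P i e, e⟫ = 0) (i : ι) {u v : E}
    (hu : u ∈ Submodule.span ℝ (Set.range fun i => P i e))
    (hv : v ∈ Submodule.span ℝ (Set.range fun i => P i e)) :
    ⟪P i u, v⟫ = 0 := by
  have swap : ∀ j k, ⟪P i (P j e), P k e⟫ = -⟪P i e, P j (P k e)⟫ := by
    intro j k
    have h := congrArg (fun v => ⟪v, P k e⟫) (hcliff i j e)
    simp only [inner_add_left, inner_smul_left, real_inner_comm (P k e) e, he2, mul_zero] at h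
    rw [hsymm j (P i e)] at h
    linarith
  have basis : ∀ j k, ⟪P i (P j e), P k e⟫ = 0 := by
    intro j k
    have h := congrArg (fun v => ⟪P i e, v⟫) (hcliff j k e)
    simp only [inner_add_right, inner_smul_right, he2, mul_zero] at h
    have h1 := swap j k
    have h2 := swap k j
    have h3 : ⟪P i (P j e), P k e⟫ = ⟪P i (P k e), P j e⟫ := by
      rw [hsymm, real_inner_comm]
    linarith
  induction hu, hv using Submodule.span_induction₂ with
  | mem_mem x y hx hy =>
    obtain ⟨j, rfl⟩ := hx
    obtain ⟨k, rfl⟩ := hy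
    exact basis j k
  | zero_left => simp
  | zero_right => simp
  | add_left x y z _ _ _ h1 h2 => simp [inner_add_left, h1, h2]
  | add_right x y z _ _ _ h1 h2 => simp [inner_add_right, h1, h2]
  | smul_left r x y _ _ h => simp [inner_smul_left, h]
  | smul_right r x y _ _ h => simp [inner_smul_right, h]

end

/-- With `e ∈ M₊`, `N = span{P₀e, …, P_me}`, `T = (ℝe ⊕ N)ᗮ`, `y ∈ T`,
`w ∈ N` nonzero, `wᵢ = ⟨Pᵢe, w⟩`, and `t` such that `(te + y + w)/‖te + y + w‖ ∈ M₊`: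
the quadratic `q(s) = 4‖w‖²s² + 4(∑ᵢ wᵢ(⟨Pᵢy, y⟩ + 2⟨Pᵢy, w⟩))s + ∑ᵢ (⟨Pᵢy, y⟩ + 2⟨Pᵢy, w⟩)²`
equals `4‖w‖²(s − t)²`; in particular `t` is a double root of `q`. -/
theorem cliffordSystem_cone_double_root_quadratic
    (l m : ℕ) (hl : 1 ≤ l)
    (P : Fin (m + 1) → EuclideanSpace ℝ (Fin (2 * l)) →ₗ[ℝ] EuclideanSpace ℝ (Fin (2 * l)))
    (hsymm : ∀ i x y, ⟪P i x, y⟫ = ⟪x, P i y⟫)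
    (horth : ∀ i x, ‖P i x‖ = ‖x‖)
    (hcliff : ∀ i j x, P i (P j x) + P j (P i x) = (if i = j then (2 : ℝ) else 0) • x)
    (e : EuclideanSpace ℝ (Fin (2 * l)))
    (he1 : ‖e‖ = 1) (he2 : ∀ i, ⟪P i e, e⟫ = 0)
    (N : Submodule ℝ (EuclideanSpace ℝ (Fin (2 * l))))
    (hN : N = Submodule.span ℝ (Set.range fun i => P i e))
    (T : Submodule ℝ (EuclideanSpace ℝ (Fin (2 * l))))
    (hT : T = (Submodule.span ℝ {e} ⊔ N)ᗮ)
    (y : EuclideanSpace ℝ (Fin (2 * l))) (hy : y ∈ T)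
    (w : EuclideanSpace ℝ (Fin (2 * l))) (hw : w ∈ N) (hw0 : w ≠ 0)
    (t : ℝ) (z : EuclideanSpace ℝ (Fin (2 * l))) (hz : z = t • e + y + w)
    (hmem : ‖(‖z‖⁻¹ • z)‖ = 1 ∧ ∀ i, ⟪P i (‖z‖⁻¹ • z), ‖z‖⁻¹ • z⟫ = 0) :
    ∀ s : ℝ,
      4 * ‖w‖ ^ 2 * s ^ 2 +
        4 * (∑ i, ⟪P i e, w⟫ * (⟪P i y, y⟫ + 2 * ⟪P i y, w⟫)) * s +
        ∑ i, (⟪P i y, y⟫ + 2 * ⟪P i y, w⟫) ^ 2 =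
      4 * ‖w‖ ^ 2 * (s - t) ^ 2 := by
  have hon := inner_clifford_orthonormal P hsymm hcliff he1
  have hz0 : ‖z‖⁻¹ ≠ 0 := by
    intro h
    simp [h] at hmem
  have hPz : ∀ i, ⟪P i z, z⟫ = 0 := by
    intro i
    have h := hmem.2 i
    rw [map_smul, real_inner_smul_left, real_inner_smul_right] at h
    simpa [hz0] using h
  subst hN hT
  have hPey : ∀ i, ⟪P i e, y⟫ = 0 := fun i =>
    (Submodule.mem_orthogonal _ _).1 hy _
      (Submodule.mem_sup_right (Submodule.subset_span ⟨i, rfl⟩))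
  have hww : ∀ i, ⟪P i w, w⟫ = 0 := fun i =>
    inner_clifford_normal_eq_zero P hsymm hcliff he2 i hw hw
  have hc : ∀ i, ⟪P i y, y⟫ + 2 * ⟪P i y, w⟫ = -2 * t * ⟪P i e, w⟫ := by
    intro i
    have h := hPz i
    have h1 : ⟪P i y, e⟫ = 0 := by rw [hsymm, real_inner_comm, hPey]
    have h2 : ⟪P i w, e⟫ = ⟪P i e, w⟫ := by rw [hsymm, real_inner_comm]
    have h3 : ⟪P i w, y⟫ = ⟪P i y, w⟫ := by rw [hsymm, real_inner_comm]
    rw [hz] at h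
    simp only [map_add, map_smul, inner_add_left, inner_add_right, real_inner_smul_left,
      real_inner_smul_right, he2, hPey, hww, h1, h2, h3] at h
    linarith
  have hsum : ∑ i, ⟪P i e, w⟫ ^ 2 = ‖w‖ ^ 2 := by
    obtain ⟨a, rfl⟩ := (Submodule.mem_span_range_iff_exists_fun ℝ).1 hw
    have hcoef : ∀ i, ⟪P i e, ∑ j, a j • P j e⟫ = a i := by
      intro i
      simp [inner_sum, real_inner_smul_right, hon]
    rw [← real_inner_self_eq_norm_sq, sum_inner]
    refine Finset.sum_congr rfl fun i _ => ?_
    rw [real_inner_smul_left, hcoef, sq]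
  intro s
  have hlin : ∑ i, ⟪P i e, w⟫ * (⟪P i y, y⟫ + 2 * ⟪P i y, w⟫) = -2 * t * ‖w‖ ^ 2 := by
    rw [← hsum, Finset.mul_sum]
    refine Finset.sum_congr rfl fun i _ => ?_
    rw [hc]; ring
  have hconst : ∑ i, (⟪P i y, y⟫ + 2 * ⟪P i y, w⟫) ^ 2 = 4 * t ^ 2 * ‖w‖ ^ 2 := by
    rw [← hsum, Finset.mul_sum]
    refine Finset.sum_congr rfl fun i _ => ?_
    rw [hc]; ring
  rw [hlin, hconst]
  ring
end
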